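/- The semi-teleparallel connection form constructed from a connection form ω by ωˢ(u)x := ω(u)x − η(Dωv(u), x)·v + η(v,x)·Σᵢ η(bᵢ,u)·Dωv(bᵢ) − η(v,u)·Σᵢ η(Dωbᵢ(v), x)·bᵢ is invariant under rotations of the triad that are constant along the preferred direction: if Λ is a real 3×3 matrix with Σₖ Λₖᵢ Λₖⱼ = δᵢⱼ, and the rotated triad b′ᵢ := Σⱼ Λⱼᵢ bⱼ is given derivative data db′ᵢ with db′ᵢ(v) = Σⱼ Λⱼᵢ dbⱼ(v), then the map ωˢ built from {v, b′ᵢ, db′ᵢ} equals the map ωˢ built from {v, bᵢ, dbᵢ}. -/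

import Mathlib

open Finset

/- Minkowski space V = ℝ⁴ with bilinear form η. -/
abbrev V4 := Fin 4 → ℝ

def eta (x y : V4) : ℝ := -(x 0 * y 0) + x 1 * y 1 + x 2 * y 2 + x 3 * y 3

/-- `f : V → V` is linear. -/
def IsLin (f : V4 → V4) : Prop :=
  (∀ x y, f (x + y) = f x + f y) ∧ ∀ (c : ℝ) (x : V4), f (c • x) = c • f x

/-- `f` is η-skew: η(f x, y) = −η(x, f y). -/
def IsSkew (f : V4 → V4) : Prop := ∀ x y, eta (f x) y = - eta x (f y)

/-- A connection form: a linear map `ω : V → End V` with each `ω u` η-skew. -/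
def ConnForm (ω : V4 → V4 → V4) : Prop :=
  (∀ u u', ω (u + u') = ω u + ω u') ∧ (∀ (c : ℝ) (u : V4), ω (c • u) = c • ω u) ∧
  (∀ u, IsLin (ω u)) ∧ (∀ u, IsSkew (ω u))

/-- The semi-teleparallel connection constructed from a Lorentz connection `ω` and
frame data `{v, dv, bᵢ, dbᵢ}`:
`ωˢ(u)x = ω(u)x − η(Dωv(u),x)·v + η(v,x)·Σᵢ η(bᵢ,u)·Dωv(bᵢ) − η(v,u)·Σᵢ η(Dωbᵢ(v),x)·bᵢ`. -/
def omegaS (v : V4) (dv : V4 → V4) (b : Fin 3 → V4) (db : Fin 3 → V4 → V4)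
    (ω : V4 → V4 → V4) (u x : V4) : V4 :=
  ω u x - eta (dv u + ω u v) x • v
    + eta v x • ∑ i : Fin 3, eta (b i) u • (dv (b i) + ω (b i) v)
    - eta v u • ∑ i : Fin 3, eta (db i v + ω v (b i)) x • b i

theorem rot_aux (Λ : Fin 3 → Fin 3 → ℝ)
    (hΛ : ∀ i j, (∑ k : Fin 3, Λ k i * Λ k j) = if i = j then 1 else 0)
    (f : Fin 3 → ℝ) (g : Fin 3 → V4) :
    ∑ i : Fin 3, (∑ j : Fin 3, Λ j i * f j) • (∑ j : Fin 3, Λ j i • g j)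
      = ∑ i : Fin 3, f i • g i := by
  have h1 : (Matrix.of Λ).transpose * Matrix.of Λ = 1 := by
    ext i j
    simp only [Matrix.mul_apply, Matrix.transpose_apply, Matrix.of_apply, Matrix.one_apply]
    exact hΛ i j
  have h2 : Matrix.of Λ * (Matrix.of Λ).transpose = 1 := mul_eq_one_comm.mp h1
  have h3 : ∀ i j, (∑ k : Fin 3, Λ i k * Λ j k) = if i = j then 1 else 0 := by
    intro i j
    have := congrFun (congrFun h2 i) j
    simpa only [Matrix.mul_apply, Matrix.transpose_apply, Matrix.of_apply,
      Matrix.one_apply] using this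
  have e : ∀ i, (∑ j : Fin 3, Λ j i * f j) • (∑ j : Fin 3, Λ j i • g j)
      = ∑ j : Fin 3, ∑ k : Fin 3, (Λ j i * Λ k i) • (f j • g k) := by
    intro i
    rw [Finset.sum_smul]
    refine Finset.sum_congr rfl fun j _ => ?_
    rw [Finset.smul_sum]
    refine Finset.sum_congr rfl fun k _ => ?_
    simp only [smul_smul]
    congr 1
    ring
  simp only [e]
  rw [Finset.sum_comm]
  refine Finset.sum_congr rfl fun j _ => ?_
  rw [Finset.sum_comm]
  simp only [← Finset.sum_smul, h3]
  simp

theorem eta_aux (c : Fin 3 → ℝ) (g : Fin 3 → V4) (x : V4) :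
    eta (∑ j : Fin 3, c j • g j) x = ∑ j : Fin 3, c j * eta (g j) x := by
  simp only [eta, Fin.sum_univ_three, Pi.add_apply, Pi.smul_apply, smul_eq_mul]
  ring

theorem lin_aux (F : V4 → V4) (hF : IsLin F) (c : Fin 3 → ℝ) (g : Fin 3 → V4) :
    F (∑ j : Fin 3, c j • g j) = ∑ j : Fin 3, c j • F (g j) := by
  simp only [Fin.sum_univ_three, hF.1, hF.2]

/-- The semi-teleparallel connection form `ωˢ` is invariant under
rotations of the triad that are constant along the preferred direction: if `Λ` is an
orthogonal 3×3 matrix (`Σₖ Λₖᵢ Λₖⱼ = δᵢⱼ`) and the rotated triad `b′ᵢ = Σⱼ Λⱼᵢ bⱼ`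
carries derivative data `db′ᵢ` with `db′ᵢ(v) = Σⱼ Λⱼᵢ dbⱼ(v)`, then `ωˢ` built from
`{v, b′, db′}` equals `ωˢ` built from `{v, b, db}`. -/
theorem statement6 (v : V4) (hv : eta v v = -1)
    (dv : V4 → V4) (hdvlin : IsLin dv) (hdvorth : ∀ u, eta v (dv u) = 0)
    (b : Fin 3 → V4) (hb : ∀ i j, eta (b i) (b j) = if i = j then 1 else 0)
    (hvb : ∀ i, eta v (b i) = 0)
    (db : Fin 3 → V4 → V4)
    (ω : V4 → V4 → V4) (hω : ConnForm ω)
    (Λ : Fin 3 → Fin 3 → ℝ)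
    (hΛ : ∀ i j, (∑ k : Fin 3, Λ k i * Λ k j) = if i = j then 1 else 0)
    (db' : Fin 3 → V4 → V4)
    (hdb' : ∀ i, db' i v = ∑ j : Fin 3, Λ j i • db j v) :
    ∀ u x, omegaS v dv (fun i => ∑ j : Fin 3, Λ j i • b j) db' ω u x
      = omegaS v dv b db ω u x := by
  intro u x
  obtain ⟨ha, hs, hl, -⟩ := hω
  have hD : IsLin (fun w => dv w + ω w v) := by
    refine ⟨fun y z => ?_, fun c y => ?_⟩
    · simp only [hdvlin.1, ha, Pi.add_apply (f := ω y)]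
      abel
    · simp only [hdvlin.2, hs, smul_add]
      rfl
  have e1 : ∀ i, dv (∑ j : Fin 3, Λ j i • b j) + ω (∑ j : Fin 3, Λ j i • b j) v
      = ∑ j : Fin 3, Λ j i • (dv (b j) + ω (b j) v) :=
    fun i => lin_aux _ hD (fun j => Λ j i) b
  have e2 : ∀ i, db' i v + ω v (∑ j : Fin 3, Λ j i • b j)
      = ∑ j : Fin 3, Λ j i • (db j v + ω v (b j)) := by
    intro i
    rw [hdb', lin_aux _ (hl v) (fun j => Λ j i) b, ← Finset.sum_add_distrib]
    simp only [smul_add]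
  unfold omegaS
  simp only [e1, e2]
  simp only [eta_aux]
  rw [rot_aux Λ hΛ (fun j => eta (b j) u), rot_aux Λ hΛ (fun j => eta (db j v + ω v (b j)) x)]
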